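/- arXiv:2502.17205 — 16 statements merged into one kernel-verified Lean document; each statement's English description precedes it below -/
import Mathlib

section
/- For every state vector U = (f, b, g, q) ∈ ℝ⁴ and every λ ∈ ℝ, the characteristic polynomial of the flux Jacobian DF(U) factorizes as det(λ·I₄ − DF(U)) = (λ − fb/2)·(λ − 3fb/2)·(λ − (fb + gq/2))·(λ − (fb + 3gq/2)). -/
/-- Flux Jacobian of the reduced two-phase thin-film system. -/
noncomputable def fluxJacobian (f b g q : ℝ) : Matrix (Fin 4) (Fin 4) ℝ :=
  !![f*b,   f^2/2, 0,       0;
     b^2/2, f*b,   0,       0;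
     g*b,   f*g,   f*b+g*q, g^2/2;
     b*q,   f*q,   q^2/2,   f*b+g*q]

/-- The characteristic polynomial of the flux Jacobian factorizes with roots
`fb/2, 3fb/2, fb + gq/2, fb + 3gq/2`. -/
theorem charpoly_factorization (f b g q lam : ℝ) :
    Matrix.det (lam • (1 : Matrix (Fin 4) (Fin 4) ℝ) - fluxJacobian f b g q) =
      (lam - f*b/2) * (lam - 3*(f*b)/2) * (lam - (f*b + g*q/2)) *
        (lam - (f*b + 3*(g*q)/2)) := by
  have h : lam • (1 : Matrix (Fin 4) (Fin 4) ℝ) - fluxJacobian f b g q =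
      !![lam - f*b, -(f^2/2), 0, 0;
         -(b^2/2), lam - f*b, 0, 0;
         -(g*b), -(f*g), lam - (f*b+g*q), -(g^2/2);
         -(b*q), -(f*q), -(q^2/2), lam - (f*b+g*q)] := by
    ext i j
    fin_cases i <;> fin_cases j <;> simp [fluxJacobian, Matrix.one_apply]
  rw [h]
  simp [Matrix.det_succ_row_zero, Fin.sum_univ_succ, Fin.succAbove]
  ring
end

section
/- For every U = (f, b, g, q) in the state space 𝒰 and each k ∈ {1, 2, 3, 4}, the vector rₖ(U) is a right eigenvector of the flux Jacobian with eigenvalue λₖ(U), i.e. DF(U)·rₖ(U) = λₖ(U)·rₖ(U), where λ₁(U) = fb/2, λ₂(U) = 3fb/2, λ₃(U) = fb + gq/2, λ₄(U) = fb + 3gq/2 and r₁(U) = (−f/b, 1, 0, 0), r₂(U) = ((fb−3gq)/(4qb), (fb−3gq)/(4qf), g/q, 1), r₃(U) = (0, 0, −g/q, 1), r₄(U) = (0, 0, g/q, 1). -/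
/-- The eigenvalues of the flux Jacobian. -/
noncomputable def eigval (f b g q : ℝ) : Fin 4 → ℝ :=
  ![f*b/2, 3*(f*b)/2, f*b + g*q/2, f*b + 3*(g*q)/2]

/-- The right eigenvectors of the flux Jacobian. -/
noncomputable def eigvec (f b g q : ℝ) : Fin 4 → (Fin 4 → ℝ) :=
  ![![-f/b, 1, 0, 0],
    ![(f*b - 3*(g*q))/(4*q*b), (f*b - 3*(g*q))/(4*q*f), g/q, 1],
    ![0, 0, -g/q, 1],
    ![0, 0, g/q, 1]]

/-- On the state space `𝒰`, each `rₖ(U)` is a right eigenvector of `DF(U)`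
with eigenvalue `λₖ(U)`. -/
theorem eigvec_is_right_eigenvector (f b g q : ℝ)
    (hf : 0 < f) (hb : 0 < b) (hg : 0 < g) (hq : 0 < q) (hU : f*b < g*q) :
    ∀ k : Fin 4,
      Matrix.mulVec (fluxJacobian f b g q) (eigvec f b g q k) =
        eigval f b g q k • eigvec f b g q k := by
  have hf' := hf.ne'
  have hb' := hb.ne'
  have hq' := hq.ne'
  intro k
  ext i
  fin_cases k <;> fin_cases i <;>
    simp [fluxJacobian, eigvec, eigval, Matrix.mulVec, dotProduct, Fin.sum_univ_four] <;>
    field_simp <;> ring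
end

section
/- For every U = (f, b, g, q) in the state space 𝒰 the four eigenvalues of the flux Jacobian are strictly ordered: fb/2 < 3fb/2 < fb + gq/2 < fb + 3gq/2. Consequently the flux Jacobian DF(U) has four distinct real eigenvalues at every point of 𝒰 (strict hyperbolicity of the reduced system). -/
/-- Strict hyperbolicity: at every state of `𝒰` the four eigenvalues are real,
strictly ordered (hence pairwise distinct), and each one is a root of the
characteristic polynomial of the flux Jacobian. -/
theorem strict_hyperbolicity (f b g q : ℝ)
    (hf : 0 < f) (hb : 0 < b) (hg : 0 < g) (hq : 0 < q) (hU : f*b < g*q) :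
    (f*b/2 < 3*(f*b)/2 ∧ 3*(f*b)/2 < f*b + g*q/2 ∧
      f*b + g*q/2 < f*b + 3*(g*q)/2) ∧
    Function.Injective (eigval f b g q) ∧
    ∀ k : Fin 4,
      Polynomial.eval (eigval f b g q k) (fluxJacobian f b g q).charpoly = 0 := by
  have h1 : 0 < f*b := mul_pos hf hb
  have h2 : 0 < g*q := mul_pos hg hq
  refine ⟨⟨by linarith, by linarith, by linarith⟩, ?_, ?_⟩
  · have hm : StrictMono (eigval f b g q) := by
      rw [Fin.strictMono_iff_lt_succ]
      intro i
      fin_cases i <;> simp [eigval] <;> linarith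
    exact hm.injective
  · have key : ∀ t : ℝ, Polynomial.eval t (fluxJacobian f b g q).charpoly
        = (t - f*b/2) * (t - 3*(f*b)/2) * (t - (f*b + g*q/2)) * (t - (f*b + 3*(g*q)/2)) := by
      intro t
      rw [Matrix.eval_charpoly]
      simp [fluxJacobian, Matrix.det_succ_row_zero, Fin.sum_univ_succ, Matrix.scalar_apply,
        Matrix.diagonal_apply, Fin.succAbove]
      ring
    intro k
    rw [key]
    fin_cases k <;> simp [eigval]
end

section
/- For every U = (f, b, g, q) in the state space 𝒰, the four right eigenvectors r₁(U) = (−f/b, 1, 0, 0), r₂(U) = ((fb−3gq)/(4qb), (fb−3gq)/(4qf), g/q, 1), r₃(U) = (0, 0, −g/q, 1), r₄(U) = (0, 0, g/q, 1) are linearly independent in ℝ⁴ (equivalently, the 4×4 matrix with columns r₁(U), r₂(U), r₃(U), r₄(U) is invertible). -/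
/-- On the state space `𝒰`, the four right eigenvectors are linearly
independent in `ℝ⁴`. -/
theorem eigvec_linearIndependent (f b g q : ℝ)
    (hf : 0 < f) (hb : 0 < b) (hg : 0 < g) (hq : 0 < q) (hU : f*b < g*q) :
    LinearIndependent ℝ (eigvec f b g q) := by
  rw [Fintype.linearIndependent_iff]
  intro c hc
  have h0 := congrFun hc 0
  have h1 := congrFun hc 1
  have h2 := congrFun hc 2
  have h3 := congrFun hc 3
  simp [eigvec, Fin.sum_univ_four] at h0 h1 h2 h3
  have hD : f*b - 3*(g*q) ≠ 0 := by
    have : 0 < g*q := mul_pos hg hq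
    intro h
    linarith
  have e0 : c 1 * (f*b - 3*(g*q)) = 4*q*f * c 0 := by
    field_simp at h0
    linarith
  have e1 : c 1 * (f*b - 3*(g*q)) = -(4*q*f * c 0) := by
    field_simp at h1
    linarith
  have c0 : c 0 = 0 := by
    have h : (4*q*f) * c 0 = 0 := by linarith
    exact (mul_eq_zero.mp h).resolve_left (by positivity)
  have c1 : c 1 = 0 := by
    rw [c0, mul_zero] at e0
    exact (mul_eq_zero.mp e0).resolve_right hD
  have e2 : g * (c 3 - c 2) = 0 := by
    rw [c1] at h2
    field_simp at h2
    first | linarith | (rw [mul_eq_zero]; right; linarith)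
  have e3 : c 3 - c 2 = 0 := (mul_eq_zero.mp e2).resolve_left hg.ne'
  intro i
  fin_cases i
  · exact c0
  · exact c1
  · show c 2 = 0
    linarith
  · show c 3 = 0
    linarith
end

section
/- The second and fourth characteristic fields of the reduced two-phase thin-film system are genuinely nonlinear on 𝒰: for every U = (f, b, g, q) ∈ 𝒰 one has ∇λ₂(U)·r₂(U) = 3(fb − 3gq)/(4q) < 0 and ∇λ₄(U)·r₄(U) = 3g > 0, where λ₂(U) = 3fb/2, λ₄(U) = fb + 3gq/2, r₂(U) = ((fb−3gq)/(4qb), (fb−3gq)/(4qf), g/q, 1) and r₄(U) = (0, 0, g/q, 1); in particular both quantities are nonzero throughout 𝒰. -/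
/-- Genuine nonlinearity of the second and fourth characteristic fields on `𝒰`:
`∇λ₂(U)·r₂(U) = 3(fb − 3gq)/(4q) < 0` and `∇λ₄(U)·r₄(U) = 3g > 0`.
The directional derivative `∇λₖ(U)·rₖ(U)` is expressed as
`fderiv ℝ λₖ U (rₖ(U))`. -/
theorem fields_two_four_genuinely_nonlinear (f b g q : ℝ)
    (hf : 0 < f) (hb : 0 < b) (hg : 0 < g) (hq : 0 < q) (hU : f*b < g*q) :
    (fderiv ℝ (fun U : Fin 4 → ℝ => 3 * (U 0 * U 1) / 2) ![f, b, g, q]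
        ![(f*b - 3*(g*q))/(4*q*b), (f*b - 3*(g*q))/(4*q*f), g/q, 1]
      = 3 * (f*b - 3*(g*q)) / (4*q) ∧
      3 * (f*b - 3*(g*q)) / (4*q) < 0) ∧
    (fderiv ℝ (fun U : Fin 4 → ℝ => U 0 * U 1 + 3 * (U 2 * U 3) / 2) ![f, b, g, q]
        ![0, 0, g/q, 1] = 3 * g ∧
      (0:ℝ) < 3 * g) := by
  have hp : ∀ (i : Fin 4) (x : Fin 4 → ℝ), HasFDerivAt (fun U : Fin 4 → ℝ => U i)
      (ContinuousLinearMap.proj (R := ℝ) (φ := fun _ : Fin 4 => ℝ) i) x :=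
    fun i x => hasFDerivAt_apply i x
  have key : ∀ (i j : Fin 4) (x : Fin 4 → ℝ), HasFDerivAt (fun U : Fin 4 → ℝ => U i * U j) _ x :=
    fun i j x => (hp i x).mul (hp j x)
  have key2 : ∀ (i j : Fin 4) (x : Fin 4 → ℝ),
      HasFDerivAt (fun U : Fin 4 → ℝ => 3 * (U i * U j) / 2) _ x :=
    fun i j x => ((key i j x).const_mul 3).mul_const (2⁻¹ : ℝ)
  refine ⟨⟨?_, ?_⟩, ?_, by positivity⟩
  · rw [(key2 0 1 _).fderiv]
    simp
    field_simp
    ring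
  · apply div_neg_of_neg_of_pos
    · nlinarith [mul_pos hg hq]
    · positivity
  · have h3 : HasFDerivAt (fun U : Fin 4 → ℝ => U 0 * U 1 + 3 * (U 2 * U 3) / 2) _ ![f, b, g, q] :=
      (key 0 1 _).add (key2 2 3 _)
    rw [h3.fderiv]
    simp
    field_simp
    ring
end

section
/- The functions w₁(U) = b/f, w₂(U) = fb, w₃(U) = q/g, w₄(U) = (fb + gq)/(gq)^{1/4} form a complete set of Riemann invariants for the reduced system: for every U = (f, b, g, q) ∈ 𝒰 and all indices j, k ∈ {1, 2, 3, 4}, the gradient ∇wₖ(U) (with respect to (f, b, g, q)) satisfies ∇wₖ(U)·r_j(U) = 0 whenever j ≠ k, and ∇wₖ(U)·rₖ(U) ≠ 0, where r₁(U) = (−f/b, 1, 0, 0), r₂(U) = ((fb−3gq)/(4qb), (fb−3gq)/(4qf), g/q, 1), r₃(U) = (0, 0, −g/q, 1), r₄(U) = (0, 0, g/q, 1). -/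
/-- The Riemann invariants `w₁ = b/f`, `w₂ = fb`, `w₃ = q/g`,
`w₄ = (fb + gq)/(gq)^{1/4}` as functions of the state `U = (f,b,g,q)`. -/
noncomputable def riemannInv : Fin 4 → ((Fin 4 → ℝ) → ℝ) :=
  ![fun U => U 1 / U 0,
    fun U => U 0 * U 1,
    fun U => U 3 / U 2,
    fun U => (U 0 * U 1 + U 2 * U 3) / (U 2 * U 3) ^ ((1:ℝ)/4)]

lemma aux_fd0 (f b g q : ℝ) (hf : 0 < f) (v : Fin 4 → ℝ) :
    fderiv ℝ (riemannInv 0) ![f, b, g, q] v = (v 1 * f - b * v 0) / f ^ 2 := by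
  have p (i : Fin 4) := hasFDerivAt_apply (𝕜 := ℝ) i (![f, b, g, q] : Fin 4 → ℝ)
  have h := (p 1).mul (HasDerivAt.comp_hasFDerivAt (f := fun U : Fin 4 → ℝ => U 0) ![f, b, g, q] (hasDerivAt_inv (by simpa using hf.ne')) (p 0))
  have e : riemannInv 0 = fun U => U 1 * (U 0)⁻¹ := by
    funext U; simp [riemannInv, div_eq_mul_inv]
  rw [e]
  refine (congrArg (fun L => L v) (HasFDerivAt.fderiv h)).trans ?_
  simp
  field_simp
  ring

lemma aux_fd1 (f b g q : ℝ) (v : Fin 4 → ℝ) :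
    fderiv ℝ (riemannInv 1) ![f, b, g, q] v = v 0 * b + f * v 1 := by
  have p (i : Fin 4) := hasFDerivAt_apply (𝕜 := ℝ) i (![f, b, g, q] : Fin 4 → ℝ)
  have h := (p 0).mul (p 1)
  have e : riemannInv 1 = fun U => U 0 * U 1 := by
    funext U; simp [riemannInv]
  rw [e]
  refine (congrArg (fun L => L v) (HasFDerivAt.fderiv h)).trans ?_
  simp
  ring

lemma aux_fd2 (f b g q : ℝ) (hg : 0 < g) (v : Fin 4 → ℝ) :
    fderiv ℝ (riemannInv 2) ![f, b, g, q] v = (v 3 * g - q * v 2) / g ^ 2 := by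
  have p (i : Fin 4) := hasFDerivAt_apply (𝕜 := ℝ) i (![f, b, g, q] : Fin 4 → ℝ)
  have h := (p 3).mul (HasDerivAt.comp_hasFDerivAt (f := fun U : Fin 4 → ℝ => U 2) ![f, b, g, q] (hasDerivAt_inv (by simpa using hg.ne')) (p 2))
  have e : riemannInv 2 = fun U => U 3 * (U 2)⁻¹ := by
    funext U; simp [riemannInv, div_eq_mul_inv]
  rw [e]
  refine (congrArg (fun L => L v) (HasFDerivAt.fderiv h)).trans ?_
  simp
  field_simp
  ring

lemma aux_fd3 (f b g q : ℝ) (hg : 0 < g) (hq : 0 < q) (v : Fin 4 → ℝ) :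
    fderiv ℝ (riemannInv 3) ![f, b, g, q] v =
      ((v 0 * b + f * v 1) + (v 2 * q + g * v 3) * (3 * (g * q) - f * b) / (4 * (g * q)))
        / (g * q) ^ ((1:ℝ)/4) := by
  have p (i : Fin 4) := hasFDerivAt_apply (𝕜 := ℝ) i (![f, b, g, q] : Fin 4 → ℝ)
  have hS : 0 < g * q := mul_pos hg hq
  have hR : 0 < (g * q) ^ ((1:ℝ)/4) := Real.rpow_pos_of_pos hS _
  have r := ((p 2).mul (p 3)).rpow_const (p := (1:ℝ)/4) (Or.inl (by simpa using ⟨hg.ne', hq.ne'⟩))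
  have h := (((p 0).mul (p 1)).add ((p 2).mul (p 3))).mul ((hasDerivAt_inv (by simpa using hR.ne')).comp_hasFDerivAt _ r)
  have e : riemannInv 3 =
      fun U => (U 0 * U 1 + U 2 * U 3) * ((U 2 * U 3) ^ ((1:ℝ)/4))⁻¹ := by
    funext U; simp [riemannInv, div_eq_mul_inv]
  have e2 : (g * q) ^ ((1:ℝ)/4 - 1) = (g * q) ^ ((1:ℝ)/4) / (g * q) := by
    rw [Real.rpow_sub hS, Real.rpow_one]
  rw [e]
  refine (congrArg (fun L => L v) (HasFDerivAt.fderiv h)).trans ?_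
  simp [-one_div, e2]
  generalize (g * q) ^ ((1:ℝ)/4) = R at *
  field_simp
  ring

theorem riemannInv_complete (f b g q : ℝ)
    (hf : 0 < f) (hb : 0 < b) (hg : 0 < g) (hq : 0 < q) (hU : f*b < g*q) :
    ∀ j k : Fin 4,
      (j ≠ k →
        fderiv ℝ (riemannInv k) ![f, b, g, q] (eigvec f b g q j) = 0) ∧
      fderiv ℝ (riemannInv k) ![f, b, g, q] (eigvec f b g q k) ≠ 0 := by
  have hS : 0 < g * q := mul_pos hg hq
  have hR : 0 < (g * q) ^ ((1:ℝ)/4) := Real.rpow_pos_of_pos hS _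
  have hX : 0 < 3 * (g * q) - f * b := by linarith
  intro j k
  constructor
  · intro hjk
    fin_cases k <;> fin_cases j <;> first | exact absurd rfl hjk | skip
    all_goals
      simp only [Fin.zero_eta, Fin.mk_one, Fin.reduceFinMk, aux_fd0 f b g q hf, aux_fd1,
        aux_fd2 f b g q hg, aux_fd3 f b g q hg hq]
      simp [eigvec, -one_div]
    all_goals try generalize (g * q) ^ ((1:ℝ)/4) = R at *
    all_goals try left
    all_goals try field_simp
    all_goals try ring_nf
    all_goals try simp
  · fin_cases k
    · have : (eigvec f b g q 0 1 * f - b * eigvec f b g q 0 0) / f ^ 2 = 2 / f := by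
        simp [eigvec]; field_simp; ring
      simp only [Fin.zero_eta, aux_fd0 f b g q hf, this]
      positivity
    · have : eigvec f b g q 1 0 * b + f * eigvec f b g q 1 1
          = -((3 * (g * q) - f * b) / (2 * q)) := by
        simp [eigvec]; field_simp; ring
      simp only [Fin.mk_one, aux_fd1, this]
      exact neg_ne_zero.mpr (by positivity)
    · have : (eigvec f b g q 2 3 * g - q * eigvec f b g q 2 2) / g ^ 2 = 2 / g := by
        simp [eigvec]; field_simp; ring
      simp only [Fin.reduceFinMk, aux_fd2 f b g q hg, this]
      positivity
    · simp only [Fin.reduceFinMk, aux_fd3 f b g q hg hq]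
      have h0 : eigvec f b g q 3 0 = 0 := by simp [eigvec]
      have h1 : eigvec f b g q 3 1 = 0 := by simp [eigvec]
      have h2 : eigvec f b g q 3 2 = g / q := by simp [eigvec]
      have h3 : eigvec f b g q 3 3 = 1 := by simp [eigvec]
      rw [h0, h1, h2, h3]
      positivity
end

section
/- The Riemann-invariant map W : 𝒰 → ℝ⁴ defined by W(f, b, g, q) = (b/f, fb, q/g, (fb + gq)/(gq)^{1/4}) is injective on 𝒰. -/
/-- The state space `𝒰` of the reduced two-phase thin-film system. -/
def stateSpace : Set (Fin 4 → ℝ) :=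
  {U | 0 < U 0 ∧ 0 < U 1 ∧ 0 < U 2 ∧ 0 < U 3 ∧ U 0 * U 1 < U 2 * U 3}

/-- The Riemann-invariant map `W(f,b,g,q) = (b/f, fb, q/g, (fb+gq)/(gq)^{1/4})`. -/
noncomputable def riemannMap (U : Fin 4 → ℝ) : Fin 4 → ℝ :=
  ![U 1 / U 0,
    U 0 * U 1,
    U 3 / U 2,
    (U 0 * U 1 + U 2 * U 3) / (U 2 * U 3) ^ ((1:ℝ)/4)]

theorem pair_aux {f b f' b' : ℝ} (hf : 0 < f) (hf' : 0 < f') (hb' : 0 < b')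
    (h1 : b / f = b' / f') (h2 : f * b = f' * b') : f = f' ∧ b = b' := by
  rw [div_eq_div_iff hf.ne' hf'.ne'] at h1
  have h3 : b' * (f - f') * (f + f') = 0 := by linear_combination (-f) * h1 + f' * h2
  have h4 : f = f' := by
    rcases mul_eq_zero.mp h3 with h | h
    · rcases mul_eq_zero.mp h with h | h
      · exact absurd h hb'.ne'
      · linarith
    · linarith
  subst h4
  exact ⟨rfl, mul_left_cancel₀ hf.ne' h2⟩

theorem lt_aux {P t u : ℝ} (ht : 0 < t) (hP : P < t ^ 4) (htu : t < u)
    (h : (P + t ^ 4) * u = (P + u ^ 4) * t) : False := by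
  have h1 : (u - t) * (P - t * u * (u ^ 2 + u * t + t ^ 2)) = 0 := by linear_combination h
  rcases mul_eq_zero.mp h1 with h2 | h2
  · linarith
  · have hu : 0 < u := ht.trans htu
    have h5 : t * t < t * u := mul_lt_mul_of_pos_left htu ht
    have h6 : t ^ 2 * (t * t) ≤ t ^ 2 * (t * u) := by gcongr
    have h7 : 0 < t * u * (u ^ 2 + u * t) := by positivity
    nlinarith

theorem s_aux {P s r : ℝ} (hs : 0 < s) (hr : 0 < r) (hPs : P < s) (hPr : P < r)
    (h : (P + s) / s ^ ((1:ℝ)/4) = (P + r) / r ^ ((1:ℝ)/4)) : s = r := by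
  have key : ∀ x : ℝ, 0 < x → (x ^ ((1:ℝ)/4)) ^ 4 = x := by
    intro x hx
    rw [← Real.rpow_natCast, ← Real.rpow_mul hx.le]
    norm_num
  have ht : 0 < s ^ ((1:ℝ)/4) := Real.rpow_pos_of_pos hs _
  have hu : 0 < r ^ ((1:ℝ)/4) := Real.rpow_pos_of_pos hr _
  have hs4 := key s hs
  have hr4 := key r hr
  generalize s ^ ((1:ℝ)/4) = t at *
  generalize r ^ ((1:ℝ)/4) = u at *
  subst hs4 hr4
  rw [div_eq_div_iff ht.ne' hu.ne'] at h
  rcases lt_trichotomy t u with h1 | h1 | h1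
  · exact (lt_aux ht hPs h1 h).elim
  · rw [h1]
  · exact (lt_aux hu hPr h1 h.symm).elim

/-- The Riemann-invariant map is injective on the state space `𝒰`. -/
theorem riemannMap_injOn : Set.InjOn riemannMap stateSpace := by
  rintro U ⟨h0, h1, h2, h3, h4⟩ V ⟨k0, k1, k2, k3, k4⟩ h
  have e0 : U 1 / U 0 = V 1 / V 0 := congrFun h 0
  have e1 : U 0 * U 1 = V 0 * V 1 := congrFun h 1
  have e2 : U 3 / U 2 = V 3 / V 2 := congrFun h 2
  have e3 : (U 0 * U 1 + U 2 * U 3) / (U 2 * U 3) ^ ((1:ℝ)/4)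
    = (V 0 * V 1 + V 2 * V 3) / (V 2 * V 3) ^ ((1:ℝ)/4) := congrFun h 3
  rw [← e1] at e3 k4
  have e4 := s_aux (mul_pos h2 h3) (mul_pos k2 k3) h4 k4 e3
  obtain ⟨a0, a1⟩ := pair_aux h0 k0 k1 e0 e1
  obtain ⟨a2, a3⟩ := pair_aux h2 k2 k3 e2 e4
  funext i
  fin_cases i
  · exact a0
  · exact a1
  · exact a2
  · exact a3
end

section
/- Let f, b, g, q : ℝ × (0, ∞) → ℝ be continuously differentiable functions with (f, b, g, q)(x, t) ∈ 𝒰 for all (x, t), satisfying pointwise the reduced two-phase thin-film system ∂_t f + (1/2)∂_x(f²b) = 0, ∂_t b + (1/2)∂_x(fb²) = 0, ∂_t g + ∂_x((1/2)g²q + fgb) = 0, ∂_t q + ∂_x((1/2)gq² + fbq) = 0. Then the Riemann invariants ξ = b/f, u = fb, τ = q/g and η = (fb + gq)/(gq)^{1/4} satisfy the diagonal transport equations ∂_t ξ + (u/2)∂_x ξ = 0, ∂_t u + (3u/2)∂_x u = 0, ∂_t τ + (u + gq/2)∂_x τ = 0 and ∂_t η + (u + 3gq/2)∂_x η = 0 pointwise.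 -/
theorem slices (f : ℝ → ℝ → ℝ)
    (hf : ContDiffOn ℝ 1 (fun p : ℝ × ℝ => f p.1 p.2) (Set.univ ×ˢ Set.Ioi 0))
    (x t : ℝ) (ht : 0 < t) :
    (∃ d, HasDerivAt (fun s => f x s) d t) ∧ (∃ d, HasDerivAt (fun y => f y t) d x) := by
  have hd : DifferentiableAt ℝ (fun p : ℝ × ℝ => f p.1 p.2) (x, t) := by
    refine (hf.contDiffAt ?_).differentiableAt (by norm_num)
    exact (isOpen_univ.prod isOpen_Ioi).mem_nhds ⟨trivial, ht⟩
  constructor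
  · have h : DifferentiableAt ℝ (fun s : ℝ => ((x, s) : ℝ × ℝ)) t := by fun_prop
    exact ⟨_, (DifferentiableAt.comp t (g := fun p : ℝ × ℝ => f p.1 p.2) hd h).hasDerivAt⟩
  · have h : DifferentiableAt ℝ (fun y : ℝ => ((y, t) : ℝ × ℝ)) x := by fun_prop
    exact ⟨_, (DifferentiableAt.comp x (g := fun p : ℝ × ℝ => f p.1 p.2) hd h).hasDerivAt⟩

theorem deriv_ratio (F B : ℝ → ℝ) (F' B' z : ℝ) (hF : HasDerivAt F F' z)
    (hB : HasDerivAt B B' z) (h0 : F z ≠ 0) :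
    deriv (fun y => B y / F y) z = (B' * F z - B z * F') / (F z) ^ 2 :=
  (hB.fun_div hF h0).deriv

theorem deriv_eta (F B G Q : ℝ → ℝ) (F' B' G' Q' z : ℝ) (hF : HasDerivAt F F' z)
    (hB : HasDerivAt B B' z) (hG : HasDerivAt G G' z) (hQ : HasDerivAt Q Q' z)
    (h0 : 0 < G z * Q z) :
    deriv (fun y => (F y * B y + G y * Q y) / (G y * Q y) ^ ((1:ℝ)/4)) z =
      ((F' * B z + F z * B') + (1 - (F z * B z + G z * Q z) / (4 * (G z * Q z))) *
        (G' * Q z + G z * Q')) / (G z * Q z) ^ ((1:ℝ)/4) := by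
  have hw : 0 < (G z * Q z) ^ ((1:ℝ)/4) := Real.rpow_pos_of_pos h0 _
  have hv := hG.fun_mul hQ
  have h := (((hF.fun_mul hB).fun_add hv).fun_div
    (hv.rpow_const (p := (1:ℝ)/4) (Or.inl h0.ne')) hw.ne').deriv
  rw [h, Real.rpow_sub_one h0.ne']
  generalize (G z * Q z) ^ ((1:ℝ)/4) = w at hw
  generalize G z * Q z = v at h0
  field_simp
  ring

/-- Along `C¹` solutions of the reduced two-phase thin-film system taking
values in the state space `𝒰`, the Riemann invariants `ξ = b/f`, `u = fb`,
`τ = q/g` and `η = (fb + gq)/(gq)^{1/4}` satisfy the diagonal transport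
equations with speeds `u/2`, `3u/2`, `u + gq/2` and `u + 3gq/2`. -/
theorem riemann_invariants_diagonal_transport
    (f b g q : ℝ → ℝ → ℝ)
    (hstate : ∀ x t : ℝ, 0 < t →
      0 < f x t ∧ 0 < b x t ∧ 0 < g x t ∧ 0 < q x t ∧
        f x t * b x t < g x t * q x t)
    (hf : ContDiffOn ℝ 1 (fun p : ℝ × ℝ => f p.1 p.2) (Set.univ ×ˢ Set.Ioi 0))
    (hb : ContDiffOn ℝ 1 (fun p : ℝ × ℝ => b p.1 p.2) (Set.univ ×ˢ Set.Ioi 0))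
    (hg : ContDiffOn ℝ 1 (fun p : ℝ × ℝ => g p.1 p.2) (Set.univ ×ˢ Set.Ioi 0))
    (hq : ContDiffOn ℝ 1 (fun p : ℝ × ℝ => q p.1 p.2) (Set.univ ×ˢ Set.Ioi 0))
    (pde1 : ∀ x t : ℝ, 0 < t →
      deriv (fun s => f x s) t
        + (1/2) * deriv (fun y => (f y t)^2 * b y t) x = 0)
    (pde2 : ∀ x t : ℝ, 0 < t →
      deriv (fun s => b x s) t
        + (1/2) * deriv (fun y => f y t * (b y t)^2) x = 0)
    (pde3 : ∀ x t : ℝ, 0 < t →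
      deriv (fun s => g x s) t
        + deriv (fun y => (g y t)^2 * q y t / 2 + f y t * g y t * b y t) x = 0)
    (pde4 : ∀ x t : ℝ, 0 < t →
      deriv (fun s => q x s) t
        + deriv (fun y => g y t * (q y t)^2 / 2 + f y t * b y t * q y t) x = 0) :
    ∀ x t : ℝ, 0 < t →
      (deriv (fun s => b x s / f x s) t
        + (f x t * b x t / 2) * deriv (fun y => b y t / f y t) x = 0) ∧
      (deriv (fun s => f x s * b x s) t
        + (3 * (f x t * b x t) / 2) * deriv (fun y => f y t * b y t) x = 0) ∧
      (deriv (fun s => q x s / g x s) t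
        + (f x t * b x t + g x t * q x t / 2)
          * deriv (fun y => q y t / g y t) x = 0) ∧
      (deriv (fun s =>
          (f x s * b x s + g x s * q x s) / (g x s * q x s) ^ ((1:ℝ)/4)) t
        + (f x t * b x t + 3 * (g x t * q x t) / 2)
          * deriv (fun y =>
              (f y t * b y t + g y t * q y t) / (g y t * q y t) ^ ((1:ℝ)/4)) x
        = 0) := by
  intro x t ht
  obtain ⟨f0, b0, g0, q0, -⟩ := hstate x t ht
  obtain ⟨⟨ft, hft⟩, ⟨fx, hfx⟩⟩ := slices f hf x t ht
  obtain ⟨⟨bt, hbt⟩, ⟨bx, hbx⟩⟩ := slices b hb x t ht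
  obtain ⟨⟨gt, hgt⟩, ⟨gx, hgx⟩⟩ := slices g hg x t ht
  obtain ⟨⟨qt, hqt⟩, ⟨qx, hqx⟩⟩ := slices q hq x t ht
  have p1 := pde1 x t ht
  have p2 := pde2 x t ht
  have p3 := pde3 x t ht
  have p4 := pde4 x t ht
  rw [hft.deriv, ((hfx.fun_pow 2).fun_mul hbx).deriv] at p1
  rw [hbt.deriv, (hfx.fun_mul (hbx.fun_pow 2)).deriv] at p2
  rw [hgt.deriv, ((((hgx.fun_pow 2).fun_mul hqx).div_const 2).fun_add
    ((hfx.fun_mul hgx).fun_mul hbx)).deriv] at p3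
  rw [hqt.deriv, (((hgx.fun_mul (hqx.fun_pow 2)).div_const 2).fun_add
    ((hfx.fun_mul hbx).fun_mul hqx)).deriv] at p4
  rw [deriv_ratio _ _ _ _ _ hft hbt f0.ne', deriv_ratio _ _ _ _ _ hfx hbx f0.ne',
    deriv_ratio _ _ _ _ _ hgt hqt g0.ne', deriv_ratio _ _ _ _ _ hgx hqx g0.ne',
    deriv_eta _ _ _ _ _ _ _ _ _ hft hbt hgt hqt (mul_pos g0 q0),
    deriv_eta _ _ _ _ _ _ _ _ _ hfx hbx hgx hqx (mul_pos g0 q0),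
    (hft.fun_mul hbt).deriv, (hfx.fun_mul hbx).deriv]
  have hw : 0 < (g x t * q x t) ^ ((1:ℝ)/4) := Real.rpow_pos_of_pos (mul_pos g0 q0) _
  generalize (g x t * q x t) ^ ((1:ℝ)/4) = w at hw
  generalize f x t = F at *
  generalize b x t = B at *
  generalize g x t = G at *
  generalize q x t = Q at *
  norm_num at p1 p2 p3 p4
  obtain rfl := eq_neg_of_add_eq_zero_left p1
  obtain rfl := eq_neg_of_add_eq_zero_left p2
  obtain rfl := eq_neg_of_add_eq_zero_left p3
  obtain rfl := eq_neg_of_add_eq_zero_left p4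
  refine ⟨?_, ?_, ?_, ?_⟩
  · field_simp
    ring
  · ring
  · field_simp
    ring
  · field_simp
    ring
end

section
/- Let ρ, μ, ν : (0, ∞) → ℝ be continuously differentiable and let ψ : (0, ∞) → ℝ be differentiable with ψ'(w) = (3/2)·w·ρ'(w) for all w > 0. Define on 𝒰 the functions E(f, b, g, q) = ρ(fb) + √(fb)·μ(√(b/f)) + √(gq)·ν(√(q/g)) + 1/(fb + gq) and Q(f, b, g, q) = ψ(fb) + (1/2)(fb)^{3/2}·μ(√(b/f)) + √(gq)·ν(√(q/g))·(fb + gq/2) − (3/2)·ln(fb + gq) − fb/(2(fb + gq)). Then (E, Q) is an entropy/entropy-flux pair for the reduced two-phase thin-film system, i.e. ∇E(U)ᵀ·DF(U) = ∇Q(U)ᵀ for every U ∈ 𝒰, where ∇ denotes the gradient with respect to (f, b, g, q). -/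
open Matrix

/-- The class of entropies: `E = ρ(fb) + √(fb)·μ(√(b/f)) + √(gq)·ν(√(q/g)) + 1/(fb+gq)`. -/
noncomputable def entropyE (ρ μ ν : ℝ → ℝ) (U : Fin 4 → ℝ) : ℝ :=
  ρ (U 0 * U 1) + Real.sqrt (U 0 * U 1) * μ (Real.sqrt (U 1 / U 0))
    + Real.sqrt (U 2 * U 3) * ν (Real.sqrt (U 3 / U 2))
    + 1 / (U 0 * U 1 + U 2 * U 3)

/-- The associated entropy fluxes:
`Q = ψ(fb) + (1/2)(fb)^{3/2}·μ(√(b/f)) + √(gq)·ν(√(q/g))·(fb + gq/2)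
      − (3/2)·ln(fb + gq) − fb/(2(fb + gq))`. -/
noncomputable def entropyFluxQ (ψ μ ν : ℝ → ℝ) (U : Fin 4 → ℝ) : ℝ :=
  ψ (U 0 * U 1)
    + (1/2) * ((U 0 * U 1) * Real.sqrt (U 0 * U 1)) * μ (Real.sqrt (U 1 / U 0))
    + Real.sqrt (U 2 * U 3) * ν (Real.sqrt (U 3 / U 2))
        * (U 0 * U 1 + U 2 * U 3 / 2)
    - (3/2) * Real.log (U 0 * U 1 + U 2 * U 3)
    - (U 0 * U 1) / (2 * (U 0 * U 1 + U 2 * U 3))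

/-- For any `C¹` functions `ρ, μ, ν` on `(0,∞)` and `ψ` with
`ψ' (w) = (3/2)·w·ρ'(w)`, the pair `(E, Q)` is an entropy/entropy-flux pair
for the reduced system, i.e. `∇E(U)ᵀ·DF(U) = ∇Q(U)ᵀ` on `𝒰` (componentwise:
`dE(U)` applied to the `j`-th column of `DF(U)` equals `∂Q/∂Uⱼ`). -/
theorem entropy_entropyFlux_pair (ρ μ ν ψ : ℝ → ℝ)
    (hρ : ContDiffOn ℝ 1 ρ (Set.Ioi 0))
    (hμ : ContDiffOn ℝ 1 μ (Set.Ioi 0))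
    (hν : ContDiffOn ℝ 1 ν (Set.Ioi 0))
    (hψ : ∀ w : ℝ, 0 < w → HasDerivAt ψ ((3/2) * w * deriv ρ w) w) :
    ∀ U : Fin 4 → ℝ,
      0 < U 0 → 0 < U 1 → 0 < U 2 → 0 < U 3 → U 0 * U 1 < U 2 * U 3 →
      ∀ j : Fin 4,
        fderiv ℝ (entropyE ρ μ ν) U ((fluxJacobian (U 0) (U 1) (U 2) (U 3))ᵀ j)
          = fderiv ℝ (entropyFluxQ ψ μ ν) U (Pi.single j 1) := by
  intro U h0 h1 h2 h3 _ j
  have dρ : ∀ w : ℝ, 0 < w → HasDerivAt ρ (deriv ρ w) w := fun w hw =>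
    ((hρ.differentiableOn (by norm_num)).differentiableAt (Ioi_mem_nhds hw)).hasDerivAt
  have dμ : ∀ w : ℝ, 0 < w → HasDerivAt μ (deriv μ w) w := fun w hw =>
    ((hμ.differentiableOn (by norm_num)).differentiableAt (Ioi_mem_nhds hw)).hasDerivAt
  have dν : ∀ w : ℝ, 0 < w → HasDerivAt ν (deriv ν w) w := fun w hw =>
    ((hν.differentiableOn (by norm_num)).differentiableAt (Ioi_mem_nhds hw)).hasDerivAt
  have p : ∀ i : Fin 4, HasFDerivAt (fun V : Fin 4 → ℝ => V i)
      (ContinuousLinearMap.proj (R := ℝ) (φ := fun _ : Fin 4 => ℝ) i) U := fun i =>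
    hasFDerivAt_apply i U
  have hw : 0 < U 0 * U 1 := mul_pos h0 h1
  have hz : 0 < U 2 * U 3 := mul_pos h2 h3
  have hr : 0 < U 1 / U 0 := div_pos h1 h0
  have ht : 0 < U 3 / U 2 := div_pos h3 h2
  have hs : 0 < U 0 * U 1 + U 2 * U 3 := add_pos hw hz
  have W := (p 0).fun_mul (p 1)
  have Z := (p 2).fun_mul (p 3)
  have i0 := (hasDerivAt_inv h0.ne').comp_hasFDerivAt U (p 0)
  have i2 := (hasDerivAt_inv h2.ne').comp_hasFDerivAt U (p 2)
  have R := (p 1).fun_mul i0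
  have T := (p 3).fun_mul i2
  simp only [Function.comp_def, ← div_eq_mul_inv] at R T
  have S := W.fun_add Z
  have sW := (Real.hasDerivAt_sqrt hw.ne').comp_hasFDerivAt U W
  have sZ := (Real.hasDerivAt_sqrt hz.ne').comp_hasFDerivAt U Z
  have sR := (Real.hasDerivAt_sqrt hr.ne').comp_hasFDerivAt U R
  have sT := (Real.hasDerivAt_sqrt ht.ne').comp_hasFDerivAt U T
  have mR := (dμ _ (Real.sqrt_pos.2 hr)).comp_hasFDerivAt U sR
  have nT := (dν _ (Real.sqrt_pos.2 ht)).comp_hasFDerivAt U sT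
  have rW := (dρ _ hw).comp_hasFDerivAt U W
  have psW := (hψ _ hw).comp_hasFDerivAt U W
  have iS := (hasDerivAt_inv hs.ne').comp_hasFDerivAt U S
  have lS := (Real.hasDerivAt_log hs.ne').comp_hasFDerivAt U S
  have HE := ((rW.fun_add (sW.fun_mul mR)).fun_add (sZ.fun_mul nT)).fun_add iS
  have HQ := (((psW.fun_add (((W.fun_mul sW).const_mul (1/2)).fun_mul mR)).fun_add
    ((sZ.fun_mul nT).fun_mul (W.fun_add (Z.mul_const (1/2))))).fun_sub
      (lS.const_mul (3/2))).fun_sub ((W.fun_mul iS).const_mul (1/2))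
  have eE : entropyE ρ μ ν = fun V : Fin 4 → ℝ =>
      ρ (V 0 * V 1) + Real.sqrt (V 0 * V 1) * μ (Real.sqrt (V 1 / V 0))
        + Real.sqrt (V 2 * V 3) * ν (Real.sqrt (V 3 / V 2)) + (V 0 * V 1 + V 2 * V 3)⁻¹ := by
    funext V
    simp [entropyE]
  have eQ : entropyFluxQ ψ μ ν = fun V : Fin 4 → ℝ => ψ (V 0 * V 1)
    + (1/2) * ((V 0 * V 1) * Real.sqrt (V 0 * V 1)) * μ (Real.sqrt (V 1 / V 0))
    + Real.sqrt (V 2 * V 3) * ν (Real.sqrt (V 3 / V 2))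
        * (V 0 * V 1 + V 2 * V 3 * (1 / 2))
    - (3/2) * Real.log (V 0 * V 1 + V 2 * V 3)
    - (1/2) * ((V 0 * V 1) * (V 0 * V 1 + V 2 * V 3)⁻¹) := by
    funext V
    simp only [entropyFluxQ, div_eq_mul_inv, mul_inv]
    ring
  simp only [Function.comp_def] at HE HQ
  rw [eE, eQ, HE.fderiv, HQ.fderiv]
  clear HE HQ eE eQ rW psW iS lS mR nT sW sZ sR sT R T S W Z i0 i2 p dρ dμ dν hψ hρ hμ hν
  generalize hf : U 0 = f at *
  generalize hb : U 1 = b at *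
  generalize hg : U 2 = g at *
  generalize hq : U 3 = q at *
  obtain ⟨x, hx, rfl⟩ : ∃ x, 0 < x ∧ f = x^2 := ⟨√f, Real.sqrt_pos.2 h0, (Real.sq_sqrt h0.le).symm⟩
  obtain ⟨y, hy, rfl⟩ : ∃ x, 0 < x ∧ b = x^2 := ⟨√b, Real.sqrt_pos.2 h1, (Real.sq_sqrt h1.le).symm⟩
  obtain ⟨u, hu, rfl⟩ : ∃ x, 0 < x ∧ g = x^2 := ⟨√g, Real.sqrt_pos.2 h2, (Real.sq_sqrt h2.le).symm⟩
  obtain ⟨v, hv, rfl⟩ : ∃ x, 0 < x ∧ q = x^2 := ⟨√q, Real.sqrt_pos.2 h3, (Real.sq_sqrt h3.le).symm⟩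
  have e1 : √(x^2*y^2) = x*y := by rw [← mul_pow]; exact Real.sqrt_sq (by positivity)
  have e2 : √(u^2*v^2) = u*v := by rw [← mul_pow]; exact Real.sqrt_sq (by positivity)
  have e3 : √(y^2/x^2) = y/x := by rw [← div_pow]; exact Real.sqrt_sq (by positivity)
  have e4 : √(v^2/u^2) = v/u := by rw [← div_pow]; exact Real.sqrt_sq (by positivity)
  rw [e1, e2, e3, e4]
  generalize deriv ρ _ = r1
  generalize deriv μ _ = m1
  generalize deriv ν _ = n1
  generalize μ _ = m
  generalize ν _ = n
  fin_cases j <;>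
    simp [fluxJacobian, Matrix.transpose_apply, Pi.single_apply, hf, hb, hg, hq] <;>
    field_simp <;> ring
end

section
/- Define on 𝒰 the functions Ē(f, b, g, q) = 1/(fb) + f^{3/2}/√b + 1/(fb + gq) + g^{3/2}/√q and Q̄(f, b, g, q) = −(3/2)·ln(fb·(fb + gq)) + (1/2)·f^{5/2}·√b − fb/(2(fb + gq)) + (g^{3/2}/√q)·(fb + gq/2). Then (Ē, Q̄) is an entropy/entropy-flux pair for the reduced two-phase thin-film system, i.e. ∇Ē(U)ᵀ·DF(U) = ∇Q̄(U)ᵀ for every U ∈ 𝒰, where ∇ denotes the gradient with respect to (f, b, g, q). -/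
open Matrix

/-- The entropy `Ē = 1/(fb) + f^{3/2}/√b + 1/(fb+gq) + g^{3/2}/√q`. -/
noncomputable def entropyBarE (U : Fin 4 → ℝ) : ℝ :=
  1 / (U 0 * U 1) + (U 0) ^ ((3:ℝ)/2) / Real.sqrt (U 1)
    + 1 / (U 0 * U 1 + U 2 * U 3) + (U 2) ^ ((3:ℝ)/2) / Real.sqrt (U 3)

/-- The entropy flux `Q̄ = −(3/2)ln(fb(fb+gq)) + (1/2)f^{5/2}√b
  − fb/(2(fb+gq)) + (g^{3/2}/√q)(fb + gq/2)`. -/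
noncomputable def entropyBarQ (U : Fin 4 → ℝ) : ℝ :=
  -(3/2) * Real.log ((U 0 * U 1) * (U 0 * U 1 + U 2 * U 3))
    + (1/2) * (U 0) ^ ((5:ℝ)/2) * Real.sqrt (U 1)
    - (U 0 * U 1) / (2 * (U 0 * U 1 + U 2 * U 3))
    + ((U 2) ^ ((3:ℝ)/2) / Real.sqrt (U 3)) * (U 0 * U 1 + U 2 * U 3 / 2)

set_option maxHeartbeats 4000000 in
/-- `(Ē, Q̄)` is an entropy/entropy-flux pair for the reduced two-phase
thin-film system: `∇Ē(U)ᵀ·DF(U) = ∇Q̄(U)ᵀ` for every `U ∈ 𝒰` (componentwise: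
`dĒ(U)` applied to the `j`-th column of `DF(U)` equals `∂Q̄/∂Uⱼ`). -/
theorem entropyBar_pair :
    ∀ U : Fin 4 → ℝ,
      0 < U 0 → 0 < U 1 → 0 < U 2 → 0 < U 3 → U 0 * U 1 < U 2 * U 3 →
      ∀ j : Fin 4,
        fderiv ℝ entropyBarE U ((fluxJacobian (U 0) (U 1) (U 2) (U 3))ᵀ j)
          = fderiv ℝ entropyBarQ U (Pi.single j 1) := by
  intro U h0 h1 h2 h3 _ j
  have p (i : Fin 4) : HasFDerivAt (fun V : Fin 4 → ℝ => V i)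
      (ContinuousLinearMap.proj (R := ℝ) (φ := fun _ : Fin 4 => ℝ) i) U :=
    hasFDerivAt_apply i U
  have hs : 0 < U 0 * U 1 := mul_pos h0 h1
  have hP : 0 < U 0 * U 1 + U 2 * U 3 := add_pos hs (mul_pos h2 h3)
  have s1 := Real.sqrt_pos.2 h1
  have s3 := Real.sqrt_pos.2 h3
  have dP := ((p 0).mul (p 1)).add ((p 2).mul (p 3))
  have ds := (p 0).mul (p 1)
  have dE := (((((hasDerivAt_inv hs.ne').comp_hasFDerivAt U ds)).add
    (((p 0).rpow_const (p := (3:ℝ)/2) (Or.inl h0.ne')).mul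
      ((hasDerivAt_inv s1.ne').comp_hasFDerivAt U ((p 1).sqrt h1.ne')))).add
    ((hasDerivAt_inv hP.ne').comp_hasFDerivAt U dP)).add
    (((p 2).rpow_const (p := (3:ℝ)/2) (Or.inl h2.ne')).mul
      ((hasDerivAt_inv s3.ne').comp_hasFDerivAt U ((p 3).sqrt h3.ne')))
  have dQ := ((((ds.mul dP).log (mul_pos hs hP).ne').const_mul (-(3/2) : ℝ)).add
    ((((p 0).rpow_const (p := (5:ℝ)/2) (Or.inl h0.ne')).const_mul (1/2 : ℝ)).mul
      ((p 1).sqrt h1.ne'))).sub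
    (ds.mul ((hasDerivAt_inv (mul_pos two_pos hP).ne').comp_hasFDerivAt U
      (dP.const_mul (2:ℝ)))) |>.add
    ((((p 2).rpow_const (p := (3:ℝ)/2) (Or.inl h2.ne')).mul
      ((hasDerivAt_inv s3.ne').comp_hasFDerivAt U ((p 3).sqrt h3.ne'))).mul
      (ds.add (((p 2).mul (p 3)).mul_const (2⁻¹ : ℝ))))
  have eE : HasFDerivAt entropyBarE _ U := dE.congr_of_eventuallyEq
    (Filter.Eventually.of_forall fun V => by
      simp [entropyBarE, div_eq_mul_inv])
  have eQ : HasFDerivAt entropyBarQ _ U := dQ.congr_of_eventuallyEq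
    (Filter.Eventually.of_forall fun V => by
      simp [entropyBarQ, div_eq_mul_inv])
  rw [eE.fderiv, eQ.fderiv]
  clear eE eQ dE dQ ds dP p
  have r32 (x : ℝ) (hx : 0 < x) : x ^ ((3:ℝ)/2) = x * √x := by
    rw [Real.sqrt_eq_rpow, show (3:ℝ)/2 = 1 + 1/2 by norm_num, Real.rpow_add hx, Real.rpow_one]
  have r52 (x : ℝ) (hx : 0 < x) : x ^ ((5:ℝ)/2) = x ^ 2 * √x := by
    rw [Real.sqrt_eq_rpow, show (5:ℝ)/2 = 2 + 1/2 by norm_num, Real.rpow_add hx, Real.rpow_two]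
  have e1 : (3:ℝ)/2 - 1 = 1/2 := by norm_num
  have e2 : (5:ℝ)/2 - 1 = 3/2 := by norm_num
  have q1 := Real.sq_sqrt h1.le
  have q3 := Real.sq_sqrt h3.le
  have r12 (x : ℝ) : x ^ ((1:ℝ)/2) = √x := (Real.sqrt_eq_rpow x).symm
  fin_cases j <;>
    simp [fluxJacobian, -one_div] <;>
    simp only [e1, e2, r12, r52 _ h0, r32 _ h0, r32 _ h2] <;>
    clear r32 r52 r12 e1 e2 <;>
    generalize √(U 0) = x0 at * <;> generalize √(U 2) = x2 at * <;>
    generalize √(U 1) = x1 at * <;> generalize √(U 3) = x3 at * <;>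
    generalize U 0 = f at * <;> generalize U 1 = b at * <;>
    generalize U 2 = g at * <;> generalize U 3 = q at * <;>
    subst q1 q3 <;> field_simp <;> ring
end

section
/- Let Ē(f, b, g, q) = 1/(fb) + f^{3/2}/√b + 1/(fb + gq) + g^{3/2}/√q on 𝒰 and let H_Ē(U) denote its Hessian matrix with respect to (f, b, g, q). Then for every U ∈ 𝒰 and each k ∈ {1, 2, 3, 4}, the quadratic form of the Hessian along the k-th right eigenvector is strictly positive: rₖ(U)ᵀ·H_Ē(U)·rₖ(U) > 0, where r₁(U) = (−f/b, 1, 0, 0), r₂(U) = ((fb−3gq)/(4qb), (fb−3gq)/(4qf), g/q, 1), r₃(U) = (0, 0, −g/q, 1), r₄(U) = (0, 0, g/q, 1). -/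
open Filter Topology in
lemma aux_line {F : (Fin 4 → ℝ) → ℝ} {u v : Fin 4 → ℝ} (hF : ContDiffAt ℝ 2 F u)
    {φ' : ℝ → ℝ} {c : ℝ}
    (h1 : ∀ᶠ t in 𝓝 (0:ℝ), HasDerivAt (fun s : ℝ => F (u + s • v)) (φ' t) t)
    (h2 : HasDerivAt φ' c 0) :
    iteratedFDeriv ℝ 2 F u ![v, v] = c := by
  rw [iteratedFDeriv_two_apply]
  simp only [Matrix.cons_val_zero, Matrix.cons_val_one]
  have hl : ∀ t : ℝ, HasDerivAt (fun s : ℝ => u + s • v) v t := fun t => by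
    simpa using ((hasDerivAt_id t).smul_const v).const_add u
  have h0 : u + (0:ℝ) • v = u := by simp
  have hd : DifferentiableAt ℝ (fderiv ℝ F) (u + (0:ℝ) • v) := by
    rw [h0]
    exact (hF.fderiv_right (m := 1) (by norm_num)).differentiableAt (by norm_num)
  have hcomp : HasDerivAt (fun t : ℝ => fderiv ℝ F (u + t • v)) (fderiv ℝ (fderiv ℝ F) u v) 0 := by
    have := hd.hasFDerivAt.comp_hasDerivAt (0:ℝ) (hl 0)
    rw [h0] at this
    exact this
  have hc2 : HasDerivAt (fun t : ℝ => fderiv ℝ F (u + t • v) v)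
      (fderiv ℝ (fderiv ℝ F) u v v) 0 := by
    simpa using hcomp.clm_apply (hasDerivAt_const (0:ℝ) v)
  have hev : ∀ᶠ y in 𝓝 u, ContDiffAt ℝ 2 F y := hF.eventually (by simp)
  have htend : Tendsto (fun s : ℝ => u + s • v) (𝓝 0) (𝓝 u) := by
    have := (hl 0).continuousAt.tendsto
    rwa [h0] at this
  have heq : (fun t : ℝ => fderiv ℝ F (u + t • v) v) =ᶠ[𝓝 0] φ' := by
    filter_upwards [h1, htend.eventually hev] with t ht1 ht2
    have := (ht2.differentiableAt (by norm_num)).hasFDerivAt.comp_hasDerivAt t (hl t)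
    exact this.unique ht1
  exact hc2.unique (h2.congr_of_eventuallyEq heq)

lemma aux_lin (f x t : ℝ) : HasDerivAt (fun s : ℝ => f + s * x) x t := by
  simpa using ((hasDerivAt_id t).mul_const x).const_add f

lemma aux_pow (f x b y α β t : ℝ) (h1 : 0 < f + t * x) (h2 : 0 < b + t * y) :
    HasDerivAt (fun s : ℝ => (f + s * x) ^ α * (b + s * y) ^ β)
      (α * x * ((f + t * x) ^ (α - 1) * (b + t * y) ^ β)
        + β * y * ((f + t * x) ^ α * (b + t * y) ^ (β - 1))) t := by
  have := ((aux_lin f x t).rpow_const (p := α) (Or.inl h1.ne')).mul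
    ((aux_lin b y t).rpow_const (p := β) (Or.inl h2.ne'))
  refine this.congr_deriv ?_
  ring

lemma aux_quad (f x b y t : ℝ) :
    HasDerivAt (fun s : ℝ => (f + s * x) * (b + s * y))
      (x * (b + t * y) + (f + t * x) * y) t :=
  (aux_lin f x t).mul (aux_lin b y t)

lemma aux_quad' (f x b y t : ℝ) :
    HasDerivAt (fun s : ℝ => x * (b + s * y) + (f + s * x) * y) (2 * x * y) t := by
  refine (((aux_lin b y t).const_mul x).add ((aux_lin f x t).mul_const y)).congr_deriv ?_
  ring

lemma aux_inv {s s' : ℝ → ℝ} {s'' t : ℝ} (h : HasDerivAt s (s' t) t)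
    (h' : HasDerivAt s' s'' t) (h0 : s t ≠ 0) :
    HasDerivAt (fun r => - s' r / (s r) ^ 2) (2 * (s' t) ^ 2 / (s t) ^ 3 - s'' / (s t) ^ 2) t := by
  refine ((h'.neg).div (h.pow 2) (pow_ne_zero 2 h0)).congr_deriv ?_
  simp
  field_simp
  ring

lemma aux_half (a c : ℝ) (hc : 0 < c) :
    a ^ ((3:ℝ)/2) / Real.sqrt c = a ^ ((3:ℝ)/2) * c ^ (-(1:ℝ)/2) := by
  rw [Real.sqrt_eq_rpow, neg_div, Real.rpow_neg hc.le, div_eq_mul_inv]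

lemma aux_pow2 (f x b y : ℝ) (hf : 0 < f) (hb : 0 < b) :
    HasDerivAt (fun t : ℝ =>
      ((3:ℝ)/2) * x * ((f + t * x) ^ ((3:ℝ)/2 - 1) * (b + t * y) ^ (-(1:ℝ)/2))
        + (-(1:ℝ)/2) * y * ((f + t * x) ^ ((3:ℝ)/2) * (b + t * y) ^ (-(1:ℝ)/2 - 1)))
      (3/4 * (f ^ ((3:ℝ)/2) * b ^ (-(1:ℝ)/2)) * (x / f - y / b) ^ 2) 0 := by
  have h1 : 0 < f + 0 * x := by simpa
  have h2 : 0 < b + 0 * y := by simpa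
  refine HasDerivAt.congr_deriv (((aux_pow f x b y ((3:ℝ)/2 - 1) (-(1:ℝ)/2) 0 h1 h2).const_mul (((3:ℝ)/2) * x)).add
    ((aux_pow f x b y ((3:ℝ)/2) (-(1:ℝ)/2 - 1) 0 h1 h2).const_mul ((-(1:ℝ)/2) * y))) ?_
  simp only [zero_mul, add_zero, Real.rpow_sub_one hf.ne', Real.rpow_sub_one hb.ne']
  field_simp
  ring

open Filter Topology in
lemma aux_main (f b g q x y z w : ℝ)
    (hf : 0 < f) (hb : 0 < b) (hg : 0 < g) (hq : 0 < q) :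
    iteratedFDeriv ℝ 2 entropyBarE ![f, b, g, q] ![![x, y, z, w], ![x, y, z, w]] =
      (2 * (x * b + f * y) ^ 2 / (f * b) ^ 3 - 2 * x * y / (f * b) ^ 2)
      + 3/4 * (f ^ ((3:ℝ)/2) * b ^ (-(1:ℝ)/2)) * (x / f - y / b) ^ 2
      + (2 * (x * b + f * y + (z * q + g * w)) ^ 2 / (f * b + g * q) ^ 3
          - (2 * x * y + 2 * z * w) / (f * b + g * q) ^ 2)
      + 3/4 * (g ^ ((3:ℝ)/2) * q ^ (-(1:ℝ)/2)) * (z / g - w / q) ^ 2 := by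
  have hC : ContDiffAt ℝ 2 entropyBarE ![f, b, g, q] := by
    have e : ∀ i : Fin 4, ContDiffAt ℝ 2 (fun U : Fin 4 → ℝ => U i) ![f, b, g, q] :=
      fun i => (contDiff_apply ℝ ℝ i).contDiffAt
    unfold entropyBarE
    refine (((contDiffAt_const.div ((e 0).mul (e 1)) ?_).add
      (((e 0).rpow_const_of_ne ?_).div ((e 1).sqrt ?_) ?_)).add
      (contDiffAt_const.div (((e 0).mul (e 1)).add ((e 2).mul (e 3))) ?_)).add
      (((e 2).rpow_const_of_ne ?_).div ((e 3).sqrt ?_) ?_) <;> simp <;> first | positivity | exact ⟨hf.ne', hb.ne'⟩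
  have hpos : ∀ a c : ℝ, 0 < a → ∀ᶠ t in 𝓝 (0:ℝ), 0 < a + t * c := by
    intro a c ha
    have := (aux_lin a c 0).continuousAt
    exact this.eventually (lt_mem_nhds (by simpa))
  refine aux_line hC (φ' := fun t =>
    (- (x * (b + t * y) + (f + t * x) * y) / ((f + t * x) * (b + t * y)) ^ 2)
    + (((3:ℝ)/2) * x * ((f + t * x) ^ ((3:ℝ)/2 - 1) * (b + t * y) ^ (-(1:ℝ)/2))
        + (-(1:ℝ)/2) * y * ((f + t * x) ^ ((3:ℝ)/2) * (b + t * y) ^ (-(1:ℝ)/2 - 1)))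
    + (- ((x * (b + t * y) + (f + t * x) * y) + (z * (q + t * w) + (g + t * z) * w))
        / ((f + t * x) * (b + t * y) + (g + t * z) * (q + t * w)) ^ 2)
    + (((3:ℝ)/2) * z * ((g + t * z) ^ ((3:ℝ)/2 - 1) * (q + t * w) ^ (-(1:ℝ)/2))
        + (-(1:ℝ)/2) * w * ((g + t * z) ^ ((3:ℝ)/2) * (q + t * w) ^ (-(1:ℝ)/2 - 1)))) ?_ ?_
  · have hall := ((hpos f x hf).and (hpos b y hb)).and ((hpos g z hg).and (hpos q w hq))
    filter_upwards [hall, hall.eventually_nhds] with t ht ht'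
    obtain ⟨⟨h1, h2⟩, h3, h4⟩ := ht
    have hp : (f + t * x) * (b + t * y) ≠ 0 := by positivity
    have hs : (f + t * x) * (b + t * y) + (g + t * z) * (q + t * w) ≠ 0 := by positivity
    have D := ((((aux_quad f x b y t).inv hp).add
      (aux_pow f x b y ((3:ℝ)/2) (-(1:ℝ)/2) t h1 h2)).add
      (((aux_quad f x b y t).add (aux_quad g z q w t)).inv hs)).add
      (aux_pow g z q w ((3:ℝ)/2) (-(1:ℝ)/2) t h3 h4)
    refine D.congr_of_eventuallyEq ?_
    filter_upwards [ht'] with s hs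
    obtain ⟨⟨k1, k2⟩, k3, k4⟩ := hs
    simp [entropyBarE, aux_half _ _ k2, aux_half _ _ k4]
  · have hp : (f + 0 * x) * (b + 0 * y) ≠ 0 := by simp; constructor <;> positivity
    have hs : (f + 0 * x) * (b + 0 * y) + (g + 0 * z) * (q + 0 * w) ≠ 0 := by
      simp; positivity
    have D := (((aux_inv (s' := fun t => x * (b + t * y) + (f + t * x) * y)
      (aux_quad f x b y 0) (aux_quad' f x b y 0) hp).add
      (aux_pow2 f x b y hf hb)).add
      (aux_inv (s := fun t => (f + t * x) * (b + t * y) + (g + t * z) * (q + t * w))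
        (s' := fun t => (x * (b + t * y) + (f + t * x) * y) + (z * (q + t * w) + (g + t * z) * w))
        ((aux_quad f x b y 0).add (aux_quad g z q w 0))
        ((aux_quad' f x b y 0).add (aux_quad' g z q w 0)) hs)).add
      (aux_pow2 g z q w hg hq)
    refine D.congr_deriv ?_
    simp

lemma aux_two (p r : ℝ) (hp : 0 < p) (h : p < r) :
    0 < 6 * ((p - 3 * r) / (4 * p)) ^ 2 / p + 1 / (2 * (p + r))
      - (2 * p * ((p - 3 * r) / (4 * p)) ^ 2 + 2 * r) / (p + r) ^ 2 := by
  obtain ⟨d, hd, rfl⟩ : ∃ d, 0 < d ∧ r = p + d := ⟨r - p, by linarith, by ring⟩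
  have : 6 * ((p - 3 * (p + d)) / (4 * p)) ^ 2 / p + 1 / (2 * (p + (p + d)))
      - (2 * p * ((p - 3 * (p + d)) / (4 * p)) ^ 2 + 2 * (p + d)) / (p + (p + d)) ^ 2
     = (6 * (2 * p + 3 * d) ^ 2 * (2 * p + d) ^ 2 + 8 * p ^ 3 * (2 * p + d)
        - 2 * p ^ 2 * (2 * p + 3 * d) ^ 2 - 32 * p ^ 3 * (p + d)) /
        (16 * p ^ 3 * (2 * p + d) ^ 2) := by
    have : 2 * p + d ≠ 0 := by positivity
    rw [show p + (p + d) = 2 * p + d by ring]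
    field_simp
    ring
  rw [this]
  apply div_pos _ (by positivity)
  ring_nf
  positivity

/-- Strict convexity criterion along the characteristic fields: for every
`U ∈ 𝒰` and each `k`, the quadratic form of the Hessian of `Ē` along the
`k`-th right eigenvector is strictly positive, `rₖ(U)ᵀ·H_Ē(U)·rₖ(U) > 0`.
The Hessian quadratic form is expressed as the second iterated derivative
evaluated at `(rₖ(U), rₖ(U))`. -/
theorem entropyBar_convex_along_eigvecs (f b g q : ℝ)
    (hf : 0 < f) (hb : 0 < b) (hg : 0 < g) (hq : 0 < q) (hU : f*b < g*q) :
    ∀ k : Fin 4,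
      0 < iteratedFDeriv ℝ 2 entropyBarE ![f, b, g, q]
            ![eigvec f b g q k, eigvec f b g q k] := by
  have hT : 0 < f ^ ((3:ℝ)/2) * b ^ (-(1:ℝ)/2) := by positivity
  have hS : 0 < g ^ ((3:ℝ)/2) * q ^ (-(1:ℝ)/2) := by positivity
  intro k
  fin_cases k
  · change 0 < iteratedFDeriv ℝ 2 entropyBarE ![f, b, g, q]
      ![![-f/b, 1, 0, 0], ![-f/b, 1, 0, 0]]
    rw [aux_main f b g q _ _ _ _ hf hb hg hq]
    have e : -f / b * b + f * 1 = 0 := by field_simp; ring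
    rw [e, show -f / b = -(f / b) by ring]
    have : 0 < f / b := by positivity
    generalize f / b = m at *
    generalize f ^ ((3:ℝ)/2) * b ^ (-(1:ℝ)/2) = T at *
    have h1 : 0 < 2 * m / (f * b) ^ 2 := by positivity
    have h2 : 0 < 2 * m / (f * b + g * q) ^ 2 := by positivity
    have h3 : 0 ≤ 3/4 * T * (-m / f - 1 / b) ^ 2 := by positivity
    have : 0 < 2 * m / (f * b) ^ 2 + 3/4 * T * (-m / f - 1 / b) ^ 2
      + 2 * m / (f * b + g * q) ^ 2 := by positivity
    convert this using 1
    ring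
  · change 0 < iteratedFDeriv ℝ 2 entropyBarE ![f, b, g, q]
      ![![(f*b - 3*(g*q))/(4*q*b), (f*b - 3*(g*q))/(4*q*f), g/q, 1],
        ![(f*b - 3*(g*q))/(4*q*b), (f*b - 3*(g*q))/(4*q*f), g/q, 1]]
    rw [aux_main f b g q _ _ _ _ hf hb hg hq]
    have key := aux_two (f * b) (g * q) (by positivity) hU
    have key2 := div_pos key (show 0 < q ^ 2 by positivity)
    have e1 : (f*b - 3*(g*q))/(4*q*b) / f - (f*b - 3*(g*q))/(4*q*f) / b = 0 := by
      field_simp; ring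
    have e2 : g / q / g - 1 / q = 0 := by field_simp; ring
    rw [e1, e2]
    refine lt_of_lt_of_eq key2 (Eq.symm ?_)
    have : f * b + g * q ≠ 0 := by positivity
    field_simp
    ring
  · change 0 < iteratedFDeriv ℝ 2 entropyBarE ![f, b, g, q]
      ![![0, 0, -g/q, 1], ![0, 0, -g/q, 1]]
    rw [aux_main f b g q _ _ _ _ hf hb hg hq]
    have e : -g / q * q + g * 1 = 0 := by field_simp; ring
    rw [e, show -g / q = -(g / q) by ring]
    have : 0 < g / q := by positivity
    generalize g / q = m at *
    generalize g ^ ((3:ℝ)/2) * q ^ (-(1:ℝ)/2) = T at *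
    have : 0 < 2 * m / (f * b + g * q) ^ 2 + 3/4 * T * (-m / g - 1 / q) ^ 2 := by positivity
    convert this using 1
    ring
  · change 0 < iteratedFDeriv ℝ 2 entropyBarE ![f, b, g, q]
      ![![0, 0, g/q, 1], ![0, 0, g/q, 1]]
    rw [aux_main f b g q _ _ _ _ hf hb hg hq]
    have e2 : g / q / g - 1 / q = 0 := by field_simp; ring
    rw [e2]
    have h4 : 0 < 3 * (g * q) - f * b := by nlinarith [mul_pos hg hq]
    have : 0 < 2 * g * (3 * (g * q) - f * b) / (q * (f * b + g * q) ^ 3) := by positivity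
    convert this using 1
    have : f * b + g * q ≠ 0 := by positivity
    field_simp
    ring
end

section
/- (2-shock curve) Let f_l, b_l, g_l, q_l, f, b, g, q be positive real numbers with b·f_l = b_l·f and q·g_l = q_l·g, and set σ = b_l·(f_l² + f_l·f + f²)/(2f_l). If in addition the third Rankine–Hugoniot relation 2σ(g − g_l) = g²q − g_l²q_l + 2(fbg − f_l b_l g_l) holds, then the left state U_l = (f_l, b_l, g_l, q_l), the right state U = (f, b, g, q) and the speed σ satisfy all four Rankine–Hugoniot conditions of the reduced two-phase thin-film system. -/
/-- The Rankine–Hugoniot conditions of the reduced two-phase thin-film system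
for a discontinuity between a left state `(fl, bl, gl, ql)` and a right state
`(f, b, g, q)` travelling with speed `σ`. -/
def RankineHugoniot (σ fl bl gl ql f b g q : ℝ) : Prop :=
  σ * (f - fl) = (1/2) * (f^2*b - fl^2*bl) ∧
  σ * (b - bl) = (1/2) * (f*b^2 - fl*bl^2) ∧
  σ * (g - gl) = (1/2) * (g^2*q - gl^2*ql) + (f*b*g - fl*bl*gl) ∧
  σ * (q - ql) = (1/2) * (g*q^2 - gl*ql^2) + (f*b*q - fl*bl*ql)

/-- 2-shock curve: if `b/f = b_l/f_l`, `q/g = q_l/g_l` and the third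
Rankine–Hugoniot relation holds for the speed
`σ = b_l(f_l² + f_l f + f²)/(2f_l)`, then the left state
`U_l = (f_l, b_l, g_l, q_l)`, the right state `U = (f, b, g, q)` and `σ`
satisfy all four Rankine–Hugoniot conditions. -/
theorem two_shock_rankineHugoniot (fl bl gl ql f b g q : ℝ)
    (hfl : 0 < fl) (hbl : 0 < bl) (hgl : 0 < gl) (hql : 0 < ql)
    (hf : 0 < f) (hb : 0 < b) (hg : 0 < g) (hq : 0 < q)
    (hbf : b * fl = bl * f) (hqg : q * gl = ql * g)
    (h3 : 2 * (bl * (fl^2 + fl*f + f^2) / (2*fl)) * (g - gl)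
            = g^2*q - gl^2*ql + 2*(f*b*g - fl*bl*gl)) :
    RankineHugoniot (bl * (fl^2 + fl*f + f^2) / (2*fl)) fl bl gl ql f b g q := by
  obtain ⟨r, rfl⟩ : ∃ r, bl = r * fl := ⟨bl / fl, by field_simp⟩
  obtain ⟨s, rfl⟩ : ∃ s, ql = s * gl := ⟨ql / gl, by field_simp⟩
  obtain rfl : b = r * f := mul_right_cancel₀ hfl.ne' (by linarith)
  obtain rfl : q = s * g := mul_right_cancel₀ hgl.ne' (by linarith)
  have hs : r * fl * (fl^2 + fl*f + f^2) / (2*fl) = r * (fl^2 + fl*f + f^2) / 2 := by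
    field_simp
  rw [hs] at h3 ⊢
  refine ⟨by ring, by ring, by linarith, ?_⟩
  linear_combination (s / 2) * h3
end

section
/- (Temple property of the fourth field) Let f, b, g_l, q_l, g, q be positive real numbers with q·g_l = q_l·g. Then the left state U_l = (f, b, g_l, q_l), the right state U = (f, b, g, q) and the speed σ = f·b + q_l·(g_l² + g_l·g + g²)/(2g_l) satisfy all four Rankine–Hugoniot conditions of the reduced two-phase thin-film system; that is, every state on the 4-rarefaction line {f = f_l, b = b_l, q/g = q_l/g_l} can also be connected to U_l by a discontinuity satisfying the Rankine–Hugoniot conditions. -/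
/-- Temple property of the fourth field: every state on the 4-rarefaction
line `{f = f_l, b = b_l, q/g = q_l/g_l}` through `U_l = (f, b, g_l, q_l)` can
also be connected to `U_l` by a discontinuity with speed
`σ = f·b + q_l(g_l² + g_l g + g²)/(2g_l)` satisfying all four
Rankine–Hugoniot conditions. -/
theorem fourth_field_temple (f b gl ql g q : ℝ)
    (hf : 0 < f) (hb : 0 < b) (hgl : 0 < gl) (hql : 0 < ql)
    (hg : 0 < g) (hq : 0 < q)
    (hqg : q * gl = ql * g) :
    RankineHugoniot (f * b + ql * (gl^2 + gl*g + g^2) / (2*gl))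
      f b gl ql f b g q := by
  have h0 : gl ≠ 0 := hgl.ne'
  have hq2 : q = ql * g / gl := by
    rw [eq_div_iff h0]
    exact hqg
  subst hq2
  refine ⟨by ring, by ring, ?_, ?_⟩
  · field_simp
    ring
  · field_simp
    ring
end

section
/- (Lax entropy inequalities for 2-shocks) Let f_l, b_l, f, b be positive real numbers with b·f_l = b_l·f and f·b < f_l·b_l, and set σ₂ = b_l·(f_l² + f_l·f + f²)/(2f_l). Then (3/2)·f·b < σ₂ < (3/2)·f_l·b_l and f_l·b_l/2 < σ₂; that is, the 2-shock speed σ₂ lies strictly between the second characteristic speeds λ₂ = 3fb/2 of the right and left states and exceeds the first characteristic speed λ₁ = f_l b_l/2 of the left state. -/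
/-- Lax entropy inequalities for 2-shocks: if `b/f = b_l/f_l` and
`fb < f_l b_l`, the 2-shock speed `σ₂ = b_l(f_l² + f_l f + f²)/(2f_l)`
satisfies `λ₂(U) = 3fb/2 < σ₂ < 3 f_l b_l/2 = λ₂(U_l)` and
`λ₁(U_l) = f_l b_l/2 < σ₂`. -/
theorem lax_inequalities_two_shock (fl bl f b : ℝ)
    (hfl : 0 < fl) (hbl : 0 < bl) (hf : 0 < f) (hb : 0 < b)
    (hbf : b * fl = bl * f) (hlt : f * b < fl * bl) :
    (3/2) * (f*b) < bl * (fl^2 + fl*f + f^2) / (2*fl) ∧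
    bl * (fl^2 + fl*f + f^2) / (2*fl) < (3/2) * (fl*bl) ∧
    fl * bl / 2 < bl * (fl^2 + fl*f + f^2) / (2*fl) := by
  have h : f < fl := by
    by_contra hc
    have hc : fl ≤ f := not_lt.mp hc
    have h1 : bl ≤ b := by
      have h2 : bl * fl ≤ b * fl := by
        rw [hbf]
        exact mul_le_mul_of_nonneg_left hc hbl.le
      exact le_of_mul_le_mul_right h2 hfl
    have h3 : fl * bl ≤ f * b := mul_le_mul hc h1 hbl.le hf.le
    linarith
  have hd : 0 < fl - f := sub_pos.mpr h
  have e : f * (b * fl) = f * (bl * f) := by rw [hbf]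
  have p1 : 0 < bl * ((fl - f) * (fl + 2 * f)) := by positivity
  have p2 : 0 < bl * ((fl - f) * (2 * fl + f)) := by positivity
  have p3 : 0 < bl * (fl * f + f ^ 2) := by positivity
  have h2 : 0 < 2 * fl := by positivity
  refine ⟨?_, ?_, ?_⟩
  · rw [lt_div_iff₀ h2]
    linarith
  · rw [div_lt_iff₀ h2]
    linarith
  · rw [lt_div_iff₀ h2]
    linarith
end

section
/- (Lax entropy inequalities for 4-shocks) Let f, b, g_l, q_l, g, q be positive real numbers with q·g_l = q_l·g and g·q < g_l·q_l, and set σ₄ = f·b + q_l·(g_l² + g_l·g + g²)/(2g_l). Then f·b + (3/2)·g·q < σ₄ < f·b + (3/2)·g_l·q_l and f·b + g_l·q_l/2 < σ₄; that is, the 4-shock speed σ₄ lies strictly between the fourth characteristic speeds λ₄ = fb + 3gq/2 of the right and left states and exceeds the third characteristic speed λ₃ = fb + g_l q_l/2 of the left state. -/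
/-- Lax entropy inequalities for 4-shocks: if `q/g = q_l/g_l` and
`gq < g_l q_l`, the 4-shock speed
`σ₄ = fb + q_l(g_l² + g_l g + g²)/(2g_l)` satisfies
`λ₄(U) = fb + 3gq/2 < σ₄ < fb + 3 g_l q_l/2 = λ₄(U_l)` and
`λ₃(U_l) = fb + g_l q_l/2 < σ₄`. -/
theorem lax_inequalities_four_shock (f b gl ql g q : ℝ)
    (hf : 0 < f) (hb : 0 < b) (hgl : 0 < gl) (hql : 0 < ql)
    (hg : 0 < g) (hq : 0 < q)
    (hqg : q * gl = ql * g) (hlt : g * q < gl * ql) :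
    (f*b + (3/2) * (g*q) < f*b + ql * (gl^2 + gl*g + g^2) / (2*gl)) ∧
    (f*b + ql * (gl^2 + gl*g + g^2) / (2*gl) < f*b + (3/2) * (gl*ql)) ∧
    (f*b + gl * ql / 2 < f*b + ql * (gl^2 + gl*g + g^2) / (2*gl)) := by
  obtain ⟨k, hk⟩ : ∃ k, k = ql / gl := ⟨_, rfl⟩
  have hk0 : 0 < k := by rw [hk]; positivity
  have e1 : ql = k * gl := by rw [hk]; field_simp
  have e2 : q = k * g := by
    apply mul_right_cancel₀ hgl.ne'
    rw [hqg, e1]; ring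
  clear hk hqg
  subst e1 e2
  have es : k * gl * (gl^2 + gl*g + g^2) / (2*gl) = k * (gl^2 + gl*g + g^2) / 2 := by
    field_simp
  have h : g < gl := by
    by_contra hc
    push Not at hc
    have h2 : gl * gl ≤ g * g := mul_le_mul hc hc hgl.le hg.le
    have h3 := mul_le_mul_of_nonneg_left h2 hk0.le
    linarith
  have h1 : k * (g * g) < k * (gl * g) := by gcongr
  have h2 : k * (gl * g) < k * (gl * gl) := by gcongr
  have h3 : 0 < k * (g * g) := by positivity
  rw [es]
  refine ⟨?_, ?_, ?_⟩ <;> linarith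
end

section
/- (Existence of the intermediate state in Case 2 of the Riemann problem) Let f_L, b_L, g_L, q_L, f_R, b_R be positive real numbers with f_R·b_R < f_L·b_L, and define F₂(g) = q_L·g³ + g·g_L·(f_R b_R − f_L b_L − √(f_L b_L f_R b_R)) − g_L²·(g_L q_L + f_L b_L − f_R b_R − √(f_L b_L f_R b_R)). Then F₂(g_L) < 0 and F₂(g) → +∞ as g → +∞, so there exists g* with g* > g_L and F₂(g*) = 0. -/
/-- Existence of the intermediate state in Case 2 of the Riemann problem:
if `f_R b_R < f_L b_L` then the cubic
`F₂(g) = q_L g³ + g g_L (f_R b_R − f_L b_L − √(f_L b_L f_R b_R))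
          − g_L² (g_L q_L + f_L b_L − f_R b_R − √(f_L b_L f_R b_R))`
satisfies `F₂(g_L) < 0`, `F₂(g) → +∞` as `g → +∞`, and hence has a root
`g* > g_L`. -/
theorem riemann_case2_intermediate_state (fL bL gL qL fR bR : ℝ)
    (hfL : 0 < fL) (hbL : 0 < bL) (hgL : 0 < gL) (hqL : 0 < qL)
    (hfR : 0 < fR) (hbR : 0 < bR) (hlt : fR * bR < fL * bL) :
    (qL * gL^3 + gL * gL * (fR*bR - fL*bL - Real.sqrt (fL*bL*(fR*bR)))
        - gL^2 * (gL*qL + fL*bL - fR*bR - Real.sqrt (fL*bL*(fR*bR))) < 0) ∧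
    Filter.Tendsto
      (fun g : ℝ => qL * g^3 + g * gL * (fR*bR - fL*bL - Real.sqrt (fL*bL*(fR*bR)))
        - gL^2 * (gL*qL + fL*bL - fR*bR - Real.sqrt (fL*bL*(fR*bR))))
      Filter.atTop Filter.atTop ∧
    ∃ gStar : ℝ, gL < gStar ∧
      qL * gStar^3 + gStar * gL * (fR*bR - fL*bL - Real.sqrt (fL*bL*(fR*bR)))
        - gL^2 * (gL*qL + fL*bL - fR*bR - Real.sqrt (fL*bL*(fR*bR))) = 0 := by
  generalize Real.sqrt (fL*bL*(fR*bR)) = s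
  have h1 : qL * gL^3 + gL * gL * (fR*bR - fL*bL - s)
        - gL^2 * (gL*qL + fL*bL - fR*bR - s) < 0 := by
    have h := mul_pos (pow_pos hgL 2) (sub_pos.2 hlt)
    nlinarith [h]
  have h2 : Filter.Tendsto
      (fun g : ℝ => qL * g^3 + g * gL * (fR*bR - fL*bL - s)
        - gL^2 * (gL*qL + fL*bL - fR*bR - s))
      Filter.atTop Filter.atTop := by
    have hq : Filter.Tendsto (fun g : ℝ => qL * g^2 + gL * (fR*bR - fL*bL - s))
        Filter.atTop Filter.atTop :=
      Filter.tendsto_atTop_add_const_right _ _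
        ((Filter.tendsto_pow_atTop (by norm_num)).const_mul_atTop hqL)
    have h3 := Filter.tendsto_atTop_add_const_right Filter.atTop
      (-(gL^2 * (gL*qL + fL*bL - fR*bR - s))) (Filter.tendsto_id.atTop_mul_atTop₀ hq)
    refine h3.congr fun g => ?_
    simp only [id]
    ring
  refine ⟨h1, h2, ?_⟩
  obtain ⟨M, hM, hM0⟩ := ((Filter.eventually_gt_atTop gL).and
    (h2.eventually_gt_atTop 0)).exists
  have hc : ContinuousOn (fun g : ℝ => qL * g^3 + g * gL * (fR*bR - fL*bL - s)
        - gL^2 * (gL*qL + fL*bL - fR*bR - s)) (Set.Icc gL M) := by fun_prop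
  obtain ⟨x, hx, hx0⟩ := intermediate_value_Ioo hM.le hc ⟨h1, hM0⟩
  exact ⟨x, hx.1, hx0⟩
end
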